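/- Let k ≥ 2 be an integer and δ ∈ (0,1), and let {(S_i,G_i)}_{i≥1} be a normal sequence of systems of configurations of degree k arising from invariant group homomorphisms on finite abelian groups. Then there exist n₀ and C > 0 (depending on δ, k and the sequence) such that for every i with |G_i| > n₀ and every integer t with C·(|G_i|/δ)·max over ℓ ∈ {2,…,k} of ((α_ℓ^k/α_1^k)·(1/k)·C(k,ℓ))^{1/(ℓ−1)} ≤ t ≤ δ|G_i|/2, the number of subsets X ⊆ G_i with |X| = t and X^k ∩ S_i^{(k)} = ∅ is at most t·(2e/δ²)^{δt}·C(⌊δ|G_i|⌋, t). -/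

import Mathlib

open Finset Filter Topology

attribute [local instance] Classical.propDecidable

/-- The set `S^{(k)}` of tuples of `S` with pairwise distinct entries. -/
noncomputable def distinctPart {k : ℕ} {G : Type} (S : Finset (Fin k → G)) :
    Finset (Fin k → G) :=
  S.filter fun x => Function.Injective x

/-- The restricted `ℓ`-th degree of freedom `α_ℓ^k(S,G)`. -/
noncomputable def alphaR {k : ℕ} {G : Type} [Fintype G] (S : Finset (Fin k → G)) (ℓ : ℕ) : ℕ :=
  (Finset.univ.filter fun U : Finset (Fin k) => U.card = ℓ).sup fun U =>
    Finset.univ.sup fun g : Fin k → G =>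
      ((distinctPart S).filter fun x => ∀ j ∈ U, x j = g j).card

/-- A sequence of configuration systems of degree `k` is normal with function `γ`. -/
def NormalSeq (k : ℕ) (G : ℕ → Type) [∀ i, Fintype (G i)]
    (S : ∀ i, Finset (Fin k → G i)) (γ : ℝ → ℝ) : Prop :=
  Tendsto (fun i => (Fintype.card (G i) : ℝ)) atTop atTop ∧
  Tendsto (fun i => (Fintype.card (G i) : ℝ) / ((S i).card : ℝ)) atTop (nhds 0) ∧
  Tendsto (fun i => (Fintype.card (G i) : ℝ) ^ k / ((S i).card : ℝ)) atTop atTop ∧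
  Tendsto (fun i => ((distinctPart (S i)).card : ℝ) / ((S i).card : ℝ)) atTop (nhds 1) ∧
  (∀ ε : ℝ, 0 < ε → ε < 1 → 0 < γ ε ∧ γ ε < 1) ∧
  (∀ ε : ℝ, 0 < ε → ε < 1 → ∀ i, ∀ X : Finset (G i),
    ε * (Fintype.card (G i) : ℝ) ≤ (X.card : ℝ) →
    γ ε * ((S i).card : ℝ) ≤ (((S i).filter (fun x => ∀ j, x j ∈ X)).card : ℝ))

lemma exists_sel (V : Type) [Fintype V] : ∃ sel : ∀ s : Finset V, s.Nonempty → V,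
    (∀ s h, sel s h ∈ s) ∧ ∀ s t hs ht, t ⊆ s → sel s hs ∈ t → sel t ht = sel s hs := by
  let f := Fintype.equivFin V
  have h : ∀ s : Finset V, s.Nonempty → ∃ x ∈ s, ∀ y ∈ s, f x ≤ f y :=
    fun s hs => s.exists_min_image f hs
  choose sel h1 h2 using h
  refine ⟨sel, h1, fun s t hs ht hts hm => ?_⟩
  apply f.injective
  exact le_antisymm (h2 t ht _ hm) (h2 s hs _ (hts (h1 t ht)))

lemma process_lemma {V : Type} [Fintype V] {Q : Type} (σ0 : Q) (pick : Q → Finset V)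
    (step : Q → V → Q) (b : ℕ) :
    ∃ (R : Finset V → Q) (T : Finset V → Finset V), ∀ I,
      T I ⊆ I ∧ (T I).card ≤ b ∧ (∀ J, T I ⊆ J → J ⊆ I → R J = R I ∧ T J = T I) ∧
      ∀ P : ℕ → Q → Prop, P 0 σ0 →
        (∀ j σ, ∀ v ∈ I, v ∈ pick σ → P j σ → P (j+1) (step σ v)) →
        (P b (R I) ∨ ((∃ j ≤ b, P j (R I)) ∧ Disjoint I (pick (R I)))) := by
  obtain ⟨sel, hs1, hs2⟩ := exists_sel V
  induction b with
  | zero =>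
    refine ⟨fun _ => σ0, fun _ => ∅, fun I => ⟨by simp, by simp, by simp, fun P h0 _ => Or.inl h0⟩⟩
  | succ b ih =>
    obtain ⟨R, T, h⟩ := ih
    refine ⟨fun I => if hn : (I ∩ pick (R I)).Nonempty then step (R I) (sel _ hn) else R I,
      fun I => if hn : (I ∩ pick (R I)).Nonempty then insert (sel _ hn) (T I) else T I, fun I => ?_⟩
    obtain ⟨h1, h2, h3, h4⟩ := h I
    by_cases hn : (I ∩ pick (R I)).Nonempty
    · have hm := hs1 _ hn
      simp only [hn, dite_true]
      refine ⟨?_, ?_, ?_, ?_⟩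
      · exact Finset.insert_subset (Finset.mem_of_mem_inter_left hm) h1
      · exact (Finset.card_insert_le _ _).trans (by omega)
      · intro J hTJ hJI
        obtain ⟨e1, e2⟩ := h3 J ((Finset.subset_insert _ _).trans hTJ) hJI
        have hmJ : sel _ hn ∈ J ∩ pick (R J) := by
          rw [e1]
          exact Finset.mem_inter.2 ⟨hTJ (Finset.mem_insert_self _ _), Finset.mem_of_mem_inter_right hm⟩
        have hnJ : (J ∩ pick (R J)).Nonempty := ⟨_, hmJ⟩
        have e3 : sel _ hnJ = sel _ hn := by
          apply hs2 _ _ hn hnJ _ hmJ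
          rw [e1]
          exact Finset.inter_subset_inter_right hJI
        simp only [hnJ, dite_true, e3]; simp only [e1, e2, and_self]
      · intro P p0 ps
        left
        rcases h4 P p0 ps with h5 | h5
        · exact ps _ _ _ (Finset.mem_of_mem_inter_left hm) (Finset.mem_of_mem_inter_right hm) h5
        · exact absurd hn (by rw [Finset.not_nonempty_iff_eq_empty]; exact Finset.disjoint_iff_inter_eq_empty.1 h5.2)
    · simp only [hn, dite_false]
      refine ⟨h1, by omega, ?_, ?_⟩
      · intro J hTJ hJI
        obtain ⟨e1, e2⟩ := h3 J hTJ hJI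
        have hnJ : ¬ (J ∩ pick (R J)).Nonempty := by
          rw [e1]
          exact fun h => hn (h.mono (Finset.inter_subset_inter_right hJI))
        simp only [hnJ, dite_false]; simp only [e1, e2, and_self]
      · intro P p0 ps
        right
        refine ⟨?_, Finset.disjoint_iff_inter_eq_empty.2 (Finset.not_nonempty_iff_eq_empty.1 hn)⟩
        rcases h4 P p0 ps with h5 | h5
        · exact ⟨b, by omega, h5⟩
        · obtain ⟨⟨j, hj, h6⟩, _⟩ := h5
          exact ⟨j, by omega, h6⟩

noncomputable def dgr {s : ℕ} {V : Type} [Fintype V] (A : (Fin s → V) → ℝ) (U : Finset (Fin s))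
    (g : Fin s → V) : ℝ := ∑ x, if ∀ j ∈ U, x j = g j then A x else 0

def GoodW {V : Type} [Fintype V] (s : ℕ) (c K α p : ℝ) (W : Finset V) (A : (Fin s → V) → ℝ) : Prop :=
  (∀ x, 0 ≤ A x) ∧ (c * α * (Fintype.card V : ℝ) ≤ ∑ x, A x) ∧
  (∀ U : Finset (Fin s), U.Nonempty → ∀ g, dgr A U g ≤ K * p ^ (U.card - 1) * α) ∧
  (∀ x, A x ≠ 0 → ∀ j, x j ∈ W)

def ContP {V : Type} (Ind : Finset V → Prop) (bd : ℕ) (Q : Finset V → Prop) : Prop :=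
  ∃ T C : Finset V → Finset V, ∀ I, Ind I → T I ⊆ I ∧ (T I).card ≤ bd ∧ I ⊆ C I ∧ Q (C I) ∧
    ∀ J, T I ⊆ J → J ⊆ I → T J = T I ∧ C J = C I

lemma sum_fcons {s : ℕ} {V : Type} [Fintype V] (f : (Fin (s+1) → V) → ℝ) :
    ∑ x, f x = ∑ v : V, ∑ y : Fin s → V, f (Fin.cons v y) := by
  rw [← Fintype.sum_prod_type' (f := fun v y => f (Fin.cons v y))]
  exact (Fintype.sum_equiv (Fin.consEquiv (fun _ => V)) _ _ (fun _ => rfl)).symm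

lemma dgr_congr {s : ℕ} {V : Type} [Fintype V] (A : (Fin s → V) → ℝ) (U : Finset (Fin s))
    (g g' : Fin s → V) (h : ∀ j ∈ U, g j = g' j) : dgr A U g = dgr A U g' := by
  unfold dgr
  refine Finset.sum_congr rfl fun x _ => ?_
  have : (∀ j ∈ U, x j = g j) ↔ (∀ j ∈ U, x j = g' j) :=
    forall₂_congr fun j hj => by rw [h j hj]
  simp only [this]

lemma dgr_add {s : ℕ} {V : Type} [Fintype V] (A B : (Fin s → V) → ℝ) (U : Finset (Fin s))
    (g : Fin s → V) : dgr (fun y => A y + B y) U g = dgr A U g + dgr B U g := by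
  unfold dgr
  rw [← Finset.sum_add_distrib]
  refine Finset.sum_congr rfl fun x _ => ?_
  split_ifs <;> simp

lemma dgr_mono {s : ℕ} {V : Type} [Fintype V] (A B : (Fin s → V) → ℝ) (h : ∀ x, A x ≤ B x)
    (U : Finset (Fin s)) (g : Fin s → V) : dgr A U g ≤ dgr B U g := by
  unfold dgr
  refine Finset.sum_le_sum fun x _ => ?_
  split_ifs <;> simp [h]

/-- degree with zero-coordinate fixed. -/
lemma dgr_cons_zero {s : ℕ} {V : Type} [Fintype V] (A : (Fin (s+1) → V) → ℝ) (U : Finset (Fin s))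
    (v : V) (g : Fin s → V) :
    dgr (fun y => A (Fin.cons v y)) U g
      = dgr A (insert 0 (U.map (Fin.succEmb s))) (Fin.cons v g) := by
  unfold dgr
  rw [sum_fcons, Finset.sum_eq_single v]
  · simp
  · intro w _ hw
    simp [hw]
  · simp

lemma dgr_cons_succ {s : ℕ} {V : Type} [Fintype V] (A : (Fin (s+1) → V) → ℝ) (U : Finset (Fin s))
    (v : V) (g : Fin s → V) :
    ∑ w, dgr (fun y => A (Fin.cons w y)) U g
      = dgr A (U.map (Fin.succEmb s)) (Fin.cons v g) := by
  unfold dgr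
  rw [sum_fcons]
  simp

lemma sum_dgr_swap {s : ℕ} {V : Type} [Fintype V] (A B : (Fin s → V) → ℝ) (U : Finset (Fin s)) :
    ∑ y, dgr A U y * B y = ∑ y, A y * dgr B U y := by
  unfold dgr
  simp only [Finset.sum_mul, Finset.mul_sum]
  rw [Finset.sum_comm]
  refine Finset.sum_congr rfl fun x _ => Finset.sum_congr rfl fun y _ => ?_
  have : (∀ j ∈ U, x j = y j) ↔ (∀ j ∈ U, y j = x j) := forall₂_congr fun j hj => eq_comm
  simp only [this]
  split_ifs <;> simp

def BadT {s : ℕ} {V : Type} [Fintype V] (D : ℕ → ℝ) (h : (Fin s → V) → ℝ) (y : Fin s → V) : Prop :=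
  ∃ U : Finset (Fin s), U.Nonempty ∧ D U.card / 2 < dgr h U y

noncomputable def Lk {s : ℕ} {V : Type} [Fintype V] (A : (Fin (s+1) → V) → ℝ) (D : ℕ → ℝ)
    (h : (Fin s → V) → ℝ) (v : V) (y : Fin s → V) : ℝ :=
  if BadT D h y then 0 else A (Fin.cons v y)

lemma dgr_nonneg {s : ℕ} {V : Type} [Fintype V] (A : (Fin s → V) → ℝ) (hA : ∀ x, 0 ≤ A x)
    (U : Finset (Fin s)) (g : Fin s → V) : 0 ≤ dgr A U g := by
  unfold dgr
  refine Finset.sum_nonneg fun x _ => ?_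
  split_ifs <;> simp [hA]

lemma bad_count {s : ℕ} {V : Type} [Fintype V] (v0 : V) (A : (Fin (s+1) → V) → ℝ) (D E : ℕ → ℝ)
    (h : (Fin s → V) → ℝ) (hA : ∀ x, 0 ≤ A x) (hh : ∀ x, 0 ≤ h x) (hD : ∀ l, 0 < D l)
    (hE : ∀ U : Finset (Fin (s+1)), U.Nonempty → ∀ g, dgr A U g ≤ E U.card) :
    ∑ v, ∑ y, (A (Fin.cons v y) - Lk A D h v y) ≤
      ∑ U : Finset (Fin s) with U.Nonempty, 2 / D U.card * ((∑ y, h y) * E U.card) := by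
  have h1 : ∀ v y, A (Fin.cons v y) - Lk A D h v y ≤
      ∑ U : Finset (Fin s) with U.Nonempty, 2 / D U.card * (dgr h U y * A (Fin.cons v y)) := by
    intro v y
    have hnn : ∀ U : Finset (Fin s), 0 ≤ 2 / D U.card * (dgr h U y * A (Fin.cons v y)) := by
      intro U
      have := hD U.card
      have := dgr_nonneg h hh U y
      have := hA (Fin.cons v y)
      positivity
    unfold Lk
    split_ifs with hb
    · obtain ⟨U, hU, hlt⟩ := hb
      refine le_trans ?_ (Finset.single_le_sum (fun U _ => hnn U) (a := U) (by simp [hU]))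
      have h2 := hD U.card
      have h3 : 1 ≤ 2 / D U.card * dgr h U y := by
        rw [div_mul_eq_mul_div, le_div_iff₀ h2]; linarith
      have := mul_le_mul_of_nonneg_right h3 (hA (Fin.cons v y))
      linarith
    · rw [sub_self]
      exact Finset.sum_nonneg fun U _ => hnn U
  refine (Finset.sum_le_sum fun v _ => Finset.sum_le_sum fun y _ => h1 v y).trans ?_
  have h2 : ∑ v, ∑ y, ∑ U : Finset (Fin s) with U.Nonempty,
        2 / D U.card * (dgr h U y * A (Fin.cons v y))
      = ∑ U : Finset (Fin s) with U.Nonempty, 2 / D U.card *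
        ∑ v, ∑ y, dgr h U y * A (Fin.cons v y) := by
    simp only [Finset.mul_sum]
    rw [Finset.sum_comm' (t' := Finset.univ) (s' := fun _ => Finset.univ) (by simp)]
    rw [Finset.sum_comm]
    simp only [Finset.sum_comm (s := Finset.filter _ _)]
  rw [h2]
  refine Finset.sum_le_sum fun U hU => ?_
  have hU' : U.Nonempty := by simpa using hU
  refine mul_le_mul_of_nonneg_left ?_ (by have := hD U.card; positivity)
  have h3 : ∑ v, ∑ y, dgr h U y * A (Fin.cons v y)
      = ∑ y, h y * dgr A (U.map (Fin.succEmb s)) (Fin.cons v0 y) := by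
    simp only [← dgr_cons_succ A U v0, Finset.mul_sum]
    rw [Finset.sum_comm (s := (Finset.univ : Finset (Fin s → V)))]
    exact Finset.sum_congr rfl fun v _ => sum_dgr_swap h (fun y => A (Fin.cons v y)) U
  rw [h3, Finset.sum_mul]
  refine Finset.sum_le_sum fun y _ => mul_le_mul_of_nonneg_left ?_ (hh y)
  have := hE (U.map (Fin.succEmb s)) (by simpa using hU') (Fin.cons v0 y)
  simpa using this

lemma Lk_nonneg {s : ℕ} {V : Type} [Fintype V] (A : (Fin (s+1) → V) → ℝ) (D : ℕ → ℝ)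
    (h : (Fin s → V) → ℝ) (hA : ∀ x, 0 ≤ A x) (v : V) (y : Fin s → V) : 0 ≤ Lk A D h v y := by
  unfold Lk; split_ifs <;> simp [hA]

lemma Lk_le {s : ℕ} {V : Type} [Fintype V] (A : (Fin (s+1) → V) → ℝ) (D : ℕ → ℝ)
    (h : (Fin s → V) → ℝ) (hA : ∀ x, 0 ≤ A x) (v : V) (y : Fin s → V) :
    Lk A D h v y ≤ A (Fin.cons v y) := by
  unfold Lk; split_ifs <;> simp [hA]

lemma dgr_Lk {s : ℕ} {V : Type} [Fintype V] (A : (Fin (s+1) → V) → ℝ) (D E : ℕ → ℝ)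
    (h : (Fin s → V) → ℝ) (hA : ∀ x, 0 ≤ A x)
    (hE : ∀ U : Finset (Fin (s+1)), U.Nonempty → ∀ g, dgr A U g ≤ E U.card)
    (v : V) (U : Finset (Fin s)) (g : Fin s → V) : dgr (Lk A D h v) U g ≤ E (U.card + 1) := by
  refine (dgr_mono _ _ (Lk_le A D h hA v) U g).trans ?_
  rw [dgr_cons_zero]
  have := hE (insert 0 (U.map (Fin.succEmb s))) (by simp) (Fin.cons v g)
  rw [Finset.card_insert_of_notMem (by simp)] at this
  simpa using this

lemma dgr_empty {s : ℕ} {V : Type} [Fintype V] (A : (Fin s → V) → ℝ) (g : Fin s → V) :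
    dgr A ∅ g = ∑ x, A x := by
  simp [dgr]

lemma dgr_step {s : ℕ} {V : Type} [Fintype V] (A : (Fin (s+1) → V) → ℝ) (D E : ℕ → ℝ)
    (h : (Fin s → V) → ℝ) (hA : ∀ x, 0 ≤ A x)
    (hE : ∀ U : Finset (Fin (s+1)), U.Nonempty → ∀ g, dgr A U g ≤ E U.card)
    (hDE : ∀ l, 1 ≤ l → E (l+1) ≤ D l / 2)
    (hh : ∀ U : Finset (Fin s), U.Nonempty → ∀ g, dgr h U g ≤ D U.card)
    (v : V) (U : Finset (Fin s)) (hU : U.Nonempty) (g : Fin s → V) :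
    dgr (fun y => h y + Lk A D h v y) U g ≤ D U.card := by
  rw [dgr_add]
  by_cases hex : ∃ y, (∀ j ∈ U, y j = g j) ∧ Lk A D h v y ≠ 0
  · obtain ⟨y, hy, hne⟩ := hex
    have hnb : ¬ BadT D h y := fun hb => hne (by simp [Lk, hb])
    have h1 : dgr h U y ≤ D U.card / 2 := by
      by_contra hc
      exact hnb ⟨U, hU, not_le.1 hc⟩
    rw [dgr_congr h U y g hy] at h1
    have h2 := dgr_Lk A D E h hA hE v U g
    have h3 := hDE U.card hU.card_pos
    linarith
  · have : dgr (Lk A D h v) U g = 0 := by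
      unfold dgr
      refine Finset.sum_eq_zero fun x _ => ?_
      split_ifs with hx
      · by_contra hc
        exact hex ⟨x, hx, hc⟩
      · rfl
    rw [this, add_zero]
    exact hh U hU g

lemma level_lemma (s : ℕ) : ∀ c K : ℝ, 0 < c → 0 < K → ∃ η : ℝ, 0 < η ∧
    ∀ (V : Type) [Fintype V], 0 < Fintype.card V → ∀ (α p : ℝ), 0 < α → 0 < p → ∀ b : ℕ,
      p * (Fintype.card V : ℝ) ≤ b → (b : ℝ) ≤ 2 * (p * (Fintype.card V : ℝ)) →
      ∀ (W : Finset V) (A : (Fin s → V) → ℝ), GoodW s c K α p W A →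
        ContP (fun I => ∀ x : Fin s → V, (∀ j, x j ∈ I) → A x = 0) (s * b)
          (fun C => η * (Fintype.card V : ℝ) ≤ ((W \ C).card : ℝ)) := by
  induction s with
  | zero =>
    intro c K hc hK
    refine ⟨1, one_pos, ?_⟩
    intro V _ hV α p hα hp b hb1 hb2 W A hG
    refine ⟨fun _ => ∅, fun I => I, fun I hI => ?_⟩
    exfalso
    have h1 := hG.2.1
    rw [Finset.sum_eq_zero (fun x _ => hI x (fun j => j.elim0))] at h1
    have : (0:ℝ) < Fintype.card V := by exact_mod_cast hV
    have : 0 < c * α * (Fintype.card V : ℝ) := by positivity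
    linarith
  | succ s ih =>
    intro c K hc hK
    set K' : ℝ := max (2 * K) (2 ^ s * 16 * K ^ 2 / c) with hK'
    have hK'1 : 2 * K ≤ K' := le_max_left _ _
    have hK'2 : 2 ^ s * 16 * K ^ 2 / c ≤ K' := le_max_right _ _
    have hK'0 : 0 < K' := by linarith
    obtain ⟨η', hη', ih⟩ := ih (c / 4) K' (by positivity) hK'0
    refine ⟨min η' (c / (2 * K)), lt_min hη' (by positivity), ?_⟩
    intro V _ hV α p hα hp b hb1 hb2 W A hG
    obtain ⟨hA0, hAm, hAd, hAW⟩ := hG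
    set n : ℝ := (Fintype.card V : ℝ) with hn
    have hn0 : 0 < n := by rw [hn]; exact_mod_cast hV
    set D : ℕ → ℝ := fun l => K' * p ^ (l - 1) * (p * α) with hD
    set E : ℕ → ℝ := fun l => K * p ^ (l - 1) * α with hE
    have hD0 : ∀ l, 0 < D l := fun l => by simp only [hD]; positivity
    have hDE : ∀ l, 1 ≤ l → E (l + 1) ≤ D l / 2 := by
      intro l hl
      obtain ⟨m, rfl⟩ : ∃ m, l = m + 1 := ⟨l - 1, by omega⟩
      simp only [hD, hE, Nat.add_sub_cancel]
      have : 0 ≤ (K' - 2 * K) * (p ^ (m+1) * α) := mul_nonneg (by linarith) (by positivity)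
      rw [pow_succ] at *
      nlinarith
    set β : ℝ := c / 4 * α with hβ
    have hβ0 : 0 < β := by positivity
    obtain ⟨v0⟩ : Nonempty V := Fintype.card_pos_iff.1 hV
    let pick : ((Fin s → V) → ℝ) → Finset V := fun h => Finset.univ.filter fun v => β ≤ ∑ y, Lk A D h v y
    let step : ((Fin s → V) → ℝ) → V → ((Fin s → V) → ℝ) := fun h v y => h y + Lk A D h v y
    obtain ⟨R, T1, hproc⟩ := process_lemma (fun _ => (0:ℝ)) pick step b
    have ih' : ∀ A' : (Fin s → V) → ℝ, ∃ T C : Finset V → Finset V,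
        GoodW s (c/4) K' (p * α) p W A' → ∀ I, (∀ x : Fin s → V, (∀ j, x j ∈ I) → A' x = 0) →
          T I ⊆ I ∧ (T I).card ≤ s * b ∧ I ⊆ C I ∧ (η' * n ≤ ((W \ (C I)).card : ℝ)) ∧
          ∀ J, T I ⊆ J → J ⊆ I → T J = T I ∧ C J = C I := by
      intro A'
      by_cases hA' : GoodW s (c/4) K' (p * α) p W A'
      · obtain ⟨T, C, h⟩ := ih V hV (p * α) p (by positivity) hp b hb1 hb2 W A' hA'
        exact ⟨T, C, fun _ => h⟩
      · exact ⟨id, id, fun h => absurd h hA'⟩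
    choose T' C' hTC' using ih'
    let Suc : Finset V → Prop := fun I => (b : ℝ) * β ≤ ∑ y, R I y
    refine ⟨fun I => if Suc I then T1 I ∪ T' (R I) I else T1 I,
      fun I => if Suc I then C' (R I) I else Finset.univ \ pick (R I), fun I hI => ?_⟩
    obtain ⟨hp1, hp2, hp3, hp4⟩ := hproc I
    have hP := hp4 (fun j h => (∀ y, 0 ≤ h y) ∧ (j : ℝ) * β ≤ ∑ y, h y ∧ ∑ y, h y ≤ j * (K * α) ∧
        (∀ U : Finset (Fin s), U.Nonempty → ∀ g, dgr h U g ≤ D U.card) ∧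
        (∀ y, h y ≠ 0 → ∀ j, y j ∈ W) ∧ (∀ y : Fin s → V, (∀ j, y j ∈ I) → h y = 0))
      (by
        refine ⟨by simp, by simp, by simp, ?_, by simp, by simp⟩
        intro U hU g
        simp only [dgr, ite_self, Finset.sum_const_zero]
        exact (hD0 _).le)
      (by
        rintro j h v hvI hvp ⟨q1, q2, q3, q4, q5, q6⟩
        have hvp' : β ≤ ∑ y, Lk A D h v y := by simpa [pick] using hvp
        have hLne : ∀ y, Lk A D h v y ≠ 0 → A (Fin.cons v y) ≠ 0 := by
          intro y hy h0
          apply hy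
          simp [Lk, h0]
        refine ⟨fun y => add_nonneg (q1 y) (Lk_nonneg A D h hA0 v y), ?_, ?_, ?_, ?_, ?_⟩
        · simp only [step, Finset.sum_add_distrib]
          push_cast
          linarith
        · simp only [step, Finset.sum_add_distrib]
          push_cast
          have : ∑ y, Lk A D h v y ≤ K * α := by
            have h5 := dgr_Lk A D E h hA0 hAd v ∅ (fun _ => v)
            rw [dgr_empty] at h5
            simpa [hE] using h5
          linarith
        · intro U hU g
          exact dgr_step A D E h hA0 hAd hDE q4 v U hU g
        · intro y hy i
          by_cases h0 : h y = 0
          · have : Lk A D h v y ≠ 0 := by simpa [step, h0] using hy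
            have := hAW _ (hLne y this) i.succ
            simpa using this
          · exact q5 y h0 i
        · intro y hy
          simp only [step, q6 y hy, zero_add]
          by_contra hc
          apply hLne y hc
          apply hI
          intro i
          refine Fin.cases ?_ ?_ i
          · simpa using hvI
          · intro i; simpa using hy i)
    by_cases hS : Suc I
    · have hP' : ∃ j : ℕ, (∀ y, 0 ≤ R I y) ∧ (j : ℝ) * β ≤ ∑ y, R I y ∧ ∑ y, R I y ≤ j * (K * α) ∧
        (∀ U : Finset (Fin s), U.Nonempty → ∀ g, dgr (R I) U g ≤ D U.card) ∧
        (∀ y, R I y ≠ 0 → ∀ j, y j ∈ W) ∧ (∀ y : Fin s → V, (∀ j, y j ∈ I) → R I y = 0) := by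
        rcases hP with h | ⟨⟨j, _, h⟩, _⟩
        · exact ⟨b, h⟩
        · exact ⟨j, h⟩
      obtain ⟨j, q1, q2, q3, q4, q5, q6⟩ := hP'
      have hgood : GoodW s (c/4) K' (p * α) p W (R I) := by
        refine ⟨q1, ?_, q4, q5⟩
        have hS' : (b:ℝ) * β ≤ ∑ y, R I y := hS
        have := mul_le_mul_of_nonneg_right hb1 hβ0.le
        refine le_trans (le_of_eq ?_) (this.trans hS')
        rw [hβ]; ring
      obtain ⟨r1, r2, r3, r4, r5⟩ := hTC' (R I) hgood I q6
      simp only [hS, if_true]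
      refine ⟨Finset.union_subset hp1 r1, ?_, r3, ?_, ?_⟩
      · refine (Finset.card_union_le _ _).trans ?_
        rw [add_mul, one_mul]; omega
      · exact le_trans (mul_le_mul_of_nonneg_right (min_le_left _ _) hn0.le) r4
      · intro J hTJ hJI
        obtain ⟨e1, e2⟩ := hp3 J (Finset.union_subset_left hTJ) hJI
        have hSJ : Suc J := by simp only [Suc, e1]; exact hS
        obtain ⟨e3, e4⟩ := r5 J (Finset.union_subset_right hTJ) hJI
        simp only [hSJ, if_true, e1, e2, e3, e4, and_self]
    · simp only [hS, if_false]
      have hP' : ∃ j ≤ b, (∀ y, 0 ≤ R I y) ∧ ∑ y, R I y ≤ j * (K * α) ∧ Disjoint I (pick (R I)) := by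
        rcases hP with h | ⟨⟨j, hj, h⟩, h2⟩
        · exact absurd h.2.1 hS
        · exact ⟨j, hj, h.1, h.2.2.1, h2⟩
      obtain ⟨j, hj, q1, q3, hdis⟩ := hP'
      refine ⟨hp1, ?_, ?_, ?_, ?_⟩
      · exact hp2.trans (Nat.le_mul_of_pos_left b (Nat.succ_pos s))
      · intro v hv
        simp only [Finset.mem_sdiff, Finset.mem_univ, true_and]
        exact Finset.disjoint_left.1 hdis hv
      · refine le_trans (mul_le_mul_of_nonneg_right (min_le_right _ _) hn0.le) ?_
        have hsub : pick (R I) ⊆ W \ (Finset.univ \ pick (R I)) := by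
          intro v hv
          simp only [Finset.mem_sdiff, Finset.mem_univ, true_and, not_not]
          refine ⟨?_, hv⟩
          have hv' : β ≤ ∑ y, Lk A D (R I) v y := by simpa [pick] using hv
          have : ∃ y, Lk A D (R I) v y ≠ 0 := by
            by_contra hc
            push Not at hc
            rw [Finset.sum_eq_zero (fun y _ => hc y)] at hv'
            linarith
          obtain ⟨y, hy⟩ := this
          have : A (Fin.cons v y) ≠ 0 := by
            intro h0
            apply hy
            simp [Lk, h0]
          simpa using hAW _ this 0
        refine le_trans ?_ (Nat.cast_le.2 (Finset.card_le_card hsub))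
        have hbad := bad_count v0 A D E (R I) hA0 q1 hD0 hAd
        have hmass : ∑ y, R I y ≤ 2 * (p * n) * (K * α) := by
          refine q3.trans (mul_le_mul_of_nonneg_right ?_ (by positivity))
          exact le_trans (by exact_mod_cast hj) hb2
        have hbad2 : ∑ U : Finset (Fin s) with U.Nonempty,
            2 / D U.card * ((∑ y, R I y) * E U.card) ≤ c / 4 * α * n := by
          have h1 : ∀ U ∈ (Finset.univ.filter fun U : Finset (Fin s) => U.Nonempty),
              2 / D U.card * ((∑ y, R I y) * E U.card) ≤ 4 * K ^ 2 * n * α / K' := by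
            intro U _
            have h2 : (∑ y, R I y) * E U.card ≤ 2 * (p * n) * (K * α) * E U.card :=
              mul_le_mul_of_nonneg_right hmass (by simp only [hE]; positivity)
            refine (mul_le_mul_of_nonneg_left h2 (by have := hD0 U.card; positivity)).trans
              (le_of_eq ?_)
            simp only [hD, hE]
            field_simp
            try ring
          refine (Finset.sum_le_card_nsmul _ _ _ h1).trans ?_
          rw [nsmul_eq_mul]
          have h3 : ((Finset.univ.filter fun U : Finset (Fin s) => U.Nonempty).card : ℝ) ≤ 2 ^ s := by
            have := Finset.card_filter_le (Finset.univ : Finset (Finset (Fin s))) (fun U => U.Nonempty)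
            rw [Finset.card_univ, Fintype.card_finset, Fintype.card_fin] at this
            exact_mod_cast this
          refine (mul_le_mul_of_nonneg_right h3 (by positivity)).trans ?_
          rw [div_le_iff₀ hc] at hK'2
          rw [← mul_div_assoc, div_le_iff₀ hK'0]
          have : 0 ≤ (K' * c - 2 ^ s * 16 * K ^ 2) * (n * α) := mul_nonneg (by linarith) (by positivity)
          nlinarith
        have hsplit : ∑ x, A x ≤ ((pick (R I)).card : ℝ) * (K * α) + n * β + c / 4 * α * n := by
          rw [sum_fcons]
          have h1 : ∀ v, ∑ y, A (Fin.cons v y) ≤ (if v ∈ pick (R I) then K * α else 0) + β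
              + ∑ y, (A (Fin.cons v y) - Lk A D (R I) v y) := by
            intro v
            have hnn : 0 ≤ ∑ y, (A (Fin.cons v y) - Lk A D (R I) v y) :=
              Finset.sum_nonneg fun y _ => sub_nonneg.2 (Lk_le A D (R I) hA0 v y)
            split_ifs with hv
            · have h5 := hAd {0} (by simp) (Fin.cons v (fun _ => v))
              have h6 := dgr_cons_zero A ∅ v (fun _ => v)
              rw [dgr_empty] at h6
              simp only [Finset.map_empty, insert_empty_eq] at h6
              rw [← h6] at h5
              simp only [Finset.card_singleton, Nat.sub_self, pow_zero, mul_one] at h5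
              linarith
            · have hv' : ∑ y, Lk A D (R I) v y < β := by simpa [pick] using hv
              rw [Finset.sum_sub_distrib]
              linarith
          refine (Finset.sum_le_sum fun v _ => h1 v).trans ?_
          rw [Finset.sum_add_distrib, Finset.sum_add_distrib, Finset.sum_ite_mem]
          simp only [Finset.univ_inter, Finset.sum_const, nsmul_eq_mul, Finset.card_univ]
          have := hbad.trans hbad2
          rw [← hn]
          linarith
        rw [div_mul_eq_mul_div, div_le_iff₀ (by positivity)]
        have h9 := hAm.trans hsplit
        rw [hβ] at h9
        have h10 : (c * n) * α ≤ (((pick (R I)).card : ℝ) * (2 * K)) * α := by nlinarith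
        exact le_of_mul_le_mul_right h10 hα
      · intro J hTJ hJI
        obtain ⟨e1, e2⟩ := hp3 J hTJ hJI
        have hSJ : ¬ Suc J := by simp only [Suc, e1]; exact hS
        simp only [hSJ, if_false, e1, e2, and_self]

lemma iterate_lemma {V : Type} [Fintype V] (Ind : Finset V → Prop) (bd : ℕ) (η d : ℝ)
    (hstep : ∀ X : Finset V, d ≤ (X.card : ℝ) → ContP Ind bd (fun C => η ≤ ((X \ C).card : ℝ))) :
    ∀ (m : ℕ) (X : Finset V), (X.card : ℝ) < d + m * η →
      ContP (fun I => Ind I ∧ I ⊆ X) (m * bd) (fun C => (C.card : ℝ) < d) := by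
  intro m
  induction m with
  | zero =>
    intro X hX
    refine ⟨fun _ => ∅, fun _ => X, fun I hI => ⟨by simp, by simp, hI.2, ?_, by simp⟩⟩
    simpa using hX
  | succ m ih =>
    intro X hX
    by_cases hXd : (X.card : ℝ) < d
    · exact ⟨fun _ => ∅, fun _ => X, fun I hI => ⟨by simp, by simp, hI.2, hXd, by simp⟩⟩
    obtain ⟨T1, C1, h1⟩ := hstep X (not_lt.1 hXd)
    have ih' : ∀ X : Finset V, ∃ T C : Finset V → Finset V, (X.card : ℝ) < d + m * η →
        ∀ I, (Ind I ∧ I ⊆ X) → T I ⊆ I ∧ (T I).card ≤ m * bd ∧ I ⊆ C I ∧ ((C I).card : ℝ) < d ∧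
          ∀ J, T I ⊆ J → J ⊆ I → T J = T I ∧ C J = C I := by
      intro X
      by_cases hX : (X.card : ℝ) < d + m * η
      · obtain ⟨T, C, h⟩ := ih X hX
        exact ⟨T, C, fun _ => h⟩
      · exact ⟨id, id, fun h => absurd h hX⟩
    choose T' C' h' using ih'
    refine ⟨fun I => T1 I ∪ T' (X ∩ C1 I) I, fun I => C' (X ∩ C1 I) I, fun I hI => ?_⟩
    obtain ⟨a1, a2, a3, a4, a5⟩ := h1 I hI.1
    have hlt : ((X ∩ C1 I).card : ℝ) < d + m * η := by
      have h3 : ((X \ C1 I).card : ℝ) + (X ∩ C1 I).card = X.card := by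
        exact_mod_cast Finset.card_sdiff_add_card_inter X (C1 I)
      push_cast at hX
      linarith
    obtain ⟨b1, b2, b3, b4, b5⟩ := h' _ hlt I ⟨hI.1, Finset.subset_inter hI.2 a3⟩
    refine ⟨Finset.union_subset a1 b1, ?_, b3, b4, ?_⟩
    · refine (Finset.card_union_le _ _).trans ?_
      rw [add_mul, one_mul]; omega
    · intro J hTJ hJI
      obtain ⟨e1, e2⟩ := a5 J (Finset.union_subset_left hTJ) hJI
      obtain ⟨e3, e4⟩ := b5 J (Finset.union_subset_right hTJ) hJI
      simp only [e1, e2, e3, e4, and_self]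

lemma choose_shift (N t : ℕ) (x : ℝ) (hx0 : 0 ≤ x) (hx : x ≤ (N : ℝ) - t + 1) (htN : t ≤ N) (j : ℕ)
    (hj : j ≤ t) : (N.choose (t - j) : ℝ) * x ^ j ≤ (t : ℝ) ^ j * N.choose t := by
  induction j with
  | zero => simp
  | succ j ih =>
    have ih := ih (by omega)
    obtain ⟨m, hm⟩ : ∃ m, t - j = m + 1 := ⟨t - j - 1, by omega⟩
    have hm' : t - (j + 1) = m := by omega
    rw [hm] at ih
    rw [hm']
    have h1 : (N.choose (m+1) : ℝ) * (m + 1) = N.choose m * ((N : ℝ) - m) := by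
      have := Nat.choose_succ_right_eq N m
      have h2 : ((N.choose (m+1) * (m+1) : ℕ) : ℝ) = ((N.choose m * (N - m) : ℕ) : ℝ) := by
        rw [this]
      push_cast [Nat.cast_sub (show m ≤ N by omega)] at h2
      exact h2
    have hmt : (m : ℝ) + 1 ≤ t := by exact_mod_cast (by omega : m + 1 ≤ t)
    calc (N.choose m : ℝ) * x ^ (j+1) = (N.choose m * x) * x ^ j := by ring
      _ ≤ (N.choose m * ((N : ℝ) - m)) * x ^ j := by
          gcongr; linarith
      _ = (m + 1) * (N.choose (m+1) * x ^ j) := by rw [← h1]; ring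
      _ ≤ t * ((t : ℝ) ^ j * N.choose t) := by gcongr
      _ = _ := by ring

lemma term_bound (n t j : ℕ) (δ : ℝ) (hδ0 : 0 < δ) (hδ1 : δ < 1) (ht : 1 ≤ t)
    (ht2 : (t : ℝ) ≤ δ * n / 2) (hj : (j : ℝ) ≤ δ * t) :
    (n.choose j : ℝ) * ((⌊δ * n⌋₊).choose (t - j) : ℝ) ≤
      (2 * Real.exp 1 / δ^2) ^ (δ * (t:ℝ)) * ((⌊δ * n⌋₊).choose t : ℝ) := by
  set N := ⌊δ * (n:ℝ)⌋₊ with hN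
  have ht0 : (1 : ℝ) ≤ t := by exact_mod_cast ht
  have hn0 : 0 < δ * (n : ℝ) := by linarith
  have hn : (0:ℝ) < n := by
    by_contra h
    nlinarith
  have hjt : j ≤ t := by
    have : (j : ℝ) ≤ t := by nlinarith
    exact_mod_cast this
  have hN1 : δ * (n : ℝ) < N + 1 := Nat.lt_floor_add_one _
  have htN : t ≤ N := Nat.le_floor (by linarith)
  have h1 := choose_shift N t (δ * n / 2) (by positivity) (by linarith) htN j hjt
  have h2 : (n.choose j : ℝ) ≤ (n : ℝ) ^ j / j.factorial := Nat.choose_le_pow_div j n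
  have h3 : (N.choose (t - j) : ℝ) ≤ (t : ℝ) ^ j * N.choose t / (δ * n / 2) ^ j := by
    rw [le_div_iff₀ (by positivity)]; exact h1
  have h4 : (δ * t) ^ j / (j.factorial : ℝ) ≤ Real.exp (δ * t) :=
    Real.pow_div_factorial_le_exp _ (by positivity) j
  have h5 : (2 / δ ^ 2) ^ j ≤ (2 / δ ^ 2 : ℝ) ^ (δ * (t : ℝ)) := by
    rw [← Real.rpow_natCast]
    apply Real.rpow_le_rpow_of_exponent_le _ hj
    rw [le_div_iff₀ (by positivity)]
    nlinarith
  calc (n.choose j : ℝ) * (N.choose (t - j) : ℝ)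
      ≤ ((n : ℝ) ^ j / j.factorial) * ((t : ℝ) ^ j * N.choose t / (δ * n / 2) ^ j) := by gcongr
    _ = ((2 / δ ^ 2) ^ j * ((δ * t) ^ j / (j.factorial : ℝ))) * N.choose t := by
        simp only [div_pow, mul_pow]
        field_simp
        ring
    _ ≤ ((2 / δ ^ 2 : ℝ) ^ (δ * (t : ℝ)) * Real.exp (δ * t)) * N.choose t := by gcongr
    _ = _ := by
        have : 2 * Real.exp 1 / δ ^ 2 = (2 / δ ^ 2) * Real.exp 1 := by ring
        rw [this, Real.mul_rpow (by positivity) (by positivity), Real.exp_one_rpow]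

lemma count_lemma {V : Type} [Fintype V] (Ind : Finset V → Prop) (t : ℕ) (δ : ℝ) (hδ0 : 0 < δ)
    (hδ1 : δ < 1) (ht : 1 ≤ t) (ht2 : (t : ℝ) ≤ δ * (Fintype.card V : ℝ) / 2) (bd : ℕ)
    (hbd : (bd : ℝ) ≤ δ * t)
    (hC : ContP Ind bd (fun C => (C.card : ℝ) < δ * (Fintype.card V : ℝ))) :
    ((Finset.univ.filter (fun X : Finset V => X.card = t ∧ Ind X)).card : ℝ)
      ≤ (t : ℝ) * (2 * Real.exp 1 / δ^2) ^ (δ * (t:ℝ)) *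
              (Nat.choose ⌊δ * (Fintype.card V : ℝ)⌋₊ t : ℝ) := by
  obtain ⟨T, C, h⟩ := hC
  have hbdt : bd + 1 ≤ t := by
    have ht0 : (1 : ℝ) ≤ t := by exact_mod_cast ht
    have : (bd : ℝ) < t := by nlinarith
    have : bd < t := by exact_mod_cast this
    omega
  set n := Fintype.card V with hn
  set N := ⌊δ * (n:ℝ)⌋₊ with hN
  let C0 : Finset V → Finset V := fun F => if (C F).card ≤ N then C F else ∅
  have hC0 : ∀ F, (C0 F).card ≤ N := by
    intro F
    simp only [C0]
    split_ifs with h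
    · exact h
    · simp
  have hsub : (Finset.univ.filter (fun X : Finset V => X.card = t ∧ Ind X)) ⊆
      (Finset.range (bd + 1)).biUnion fun j => (Finset.powersetCard j Finset.univ).biUnion fun F =>
        (Finset.powersetCard (t - j) (C0 F)).image fun Y => F ∪ Y := by
    intro I hI
    simp only [Finset.mem_filter, Finset.mem_univ, true_and] at hI
    obtain ⟨a1, a2, a3, a4, a5⟩ := h I hI.2
    obtain ⟨_, e2⟩ := a5 (T I) subset_rfl a1
    simp only [Finset.mem_biUnion, Finset.mem_range, Finset.mem_powersetCard, Finset.mem_image,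
      Finset.subset_univ, true_and]
    refine ⟨(T I).card, by omega, T I, rfl, I \ T I, ⟨?_, ?_⟩, Finset.union_sdiff_of_subset a1⟩
    · have : C0 (T I) = C I := by
        simp only [C0, e2]
        rw [if_pos]
        exact Nat.le_floor a4.le
      rw [this]
      exact Finset.sdiff_subset.trans a3
    · rw [Finset.card_sdiff_of_subset a1, hI.1]
  have hcard : (Finset.univ.filter (fun X : Finset V => X.card = t ∧ Ind X)).card ≤
      ∑ j ∈ Finset.range (bd + 1), n.choose j * N.choose (t - j) := by
    refine (Finset.card_le_card hsub).trans (Finset.card_biUnion_le.trans ?_)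
    refine Finset.sum_le_sum fun j _ => ?_
    refine Finset.card_biUnion_le.trans ?_
    refine (Finset.sum_le_card_nsmul _ _ (N.choose (t - j)) ?_).trans ?_
    · intro F _
      refine Finset.card_image_le.trans ?_
      rw [Finset.card_powersetCard]
      exact Nat.choose_le_choose _ (hC0 F)
    · rw [Finset.card_powersetCard, Finset.card_univ, smul_eq_mul]
  have hcard' : ((Finset.univ.filter (fun X : Finset V => X.card = t ∧ Ind X)).card : ℝ) ≤
      ∑ j ∈ Finset.range (bd + 1), (n.choose j : ℝ) * N.choose (t - j) := by
    exact_mod_cast hcard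
  refine hcard'.trans ((Finset.sum_le_card_nsmul _ _
    ((2 * Real.exp 1 / δ^2) ^ (δ * (t:ℝ)) * (N.choose t : ℝ)) ?_).trans ?_)
  · intro j hj
    refine term_bound n t j δ hδ0 hδ1 ht ht2 ?_
    have : j ≤ bd := by simpa [Nat.lt_succ_iff] using hj
    exact le_trans (by exact_mod_cast this) hbd
  · rw [Finset.card_range, nsmul_eq_mul, mul_assoc]
    refine mul_le_mul_of_nonneg_right (by exact_mod_cast hbdt) (by positivity)

lemma alphaR_ge {k : ℕ} {G : Type} [Fintype G] (S : Finset (Fin k → G)) (U : Finset (Fin k))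
    (g : Fin k → G) :
    ((distinctPart S).filter fun x => ∀ j ∈ U, x j = g j).card ≤ alphaR S U.card := by
  unfold alphaR
  refine le_trans ?_ (Finset.le_sup (s := Finset.univ.filter fun U' : Finset (Fin k) => U'.card = U.card)
    (b := U) (by simp))
  exact Finset.le_sup (f := fun g : Fin k → G =>
    ((distinctPart S).filter fun x => ∀ j ∈ U, x j = g j).card) (Finset.mem_univ g)

lemma alphaR_one {k : ℕ} {G : Type} [Fintype G] [AddCommGroup G] (S : Finset (Fin k → G))
    (M : (Fin k → G) →+ (Fin k → G)) (hinv : ∀ x : G, M (fun _ => x) = 0)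
    (hker : ∀ x, x ∈ S ↔ M x = 0) :
    alphaR S 1 * Fintype.card G ≤ (distinctPart S).card := by
  rw [← Nat.le_div_iff_mul_le (Fintype.card_pos)]
  unfold alphaR
  refine Finset.sup_le fun U hU => Finset.sup_le fun g _ => ?_
  rw [Nat.le_div_iff_mul_le (Fintype.card_pos)]
  obtain ⟨j, rfl⟩ := Finset.card_eq_one.1 (by simpa using hU : U.card = 1)
  simp only [Finset.mem_singleton, forall_eq]
  have h1 : (distinctPart S).card = ∑ a : G, ((distinctPart S).filter fun x => x j = a).card :=
    Finset.card_eq_sum_card_fiberwise (fun _ _ => by simp)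
  rw [h1, mul_comm, ← smul_eq_mul, ← Finset.card_univ]
  refine Finset.card_nsmul_le_sum _ _ _ fun a _ => ?_
  refine Finset.card_le_card_of_injOn (fun x i => x i + (a - g j)) ?_ ?_
  · intro x hx
    simp only [distinctPart, Finset.coe_filter, Finset.mem_filter, Set.mem_ofPred_eq] at hx ⊢
    obtain ⟨⟨hS, hi⟩, hj⟩ := hx
    refine ⟨⟨?_, ?_⟩, ?_⟩
    · rw [hker] at hS ⊢
      have : (fun i => x i + (a - g j)) = x + (fun _ => a - g j) := rfl
      rw [this, map_add, hS, hinv, add_zero]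
    · intro i i' hii
      exact hi (add_right_cancel hii)
    · rw [hj]; abel
  · intro x _ y _ hxy
    funext i
    exact add_right_cancel (congrFun hxy i)

lemma alpha_bound {k : ℕ} (hk : 2 ≤ k) {G : Type} [Fintype G] (S : Finset (Fin k → G)) (n q : ℝ)
    (C δ : ℝ) (t : ℕ) (hC : 0 < C) (hδ : 0 < δ) (hn : 0 < n) (hq : q = δ * t / (C * n))
    (ha : 0 < alphaR S 1)
    (h : C * (n / δ) *
          sSup {x : ℝ | ∃ ℓ : ℕ, 2 ≤ ℓ ∧ ℓ ≤ k ∧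
            x = ((alphaR S ℓ : ℝ) / (alphaR S 1 : ℝ) * (1/(k:ℝ)) *
                  (Nat.choose k ℓ : ℝ)) ^ (1 / ((ℓ:ℝ) - 1))} ≤ (t : ℝ)) (l : ℕ) (hl : 2 ≤ l)
    (hlk : l ≤ k) : (alphaR S l : ℝ) ≤ (k * q) ^ (l - 1) * alphaR S 1 := by
  have hq0 : 0 ≤ q := by rw [hq]; positivity
  have hbdd : BddAbove {x : ℝ | ∃ ℓ : ℕ, 2 ≤ ℓ ∧ ℓ ≤ k ∧
            x = ((alphaR S ℓ : ℝ) / (alphaR S 1 : ℝ) * (1/(k:ℝ)) *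
                  (Nat.choose k ℓ : ℝ)) ^ (1 / ((ℓ:ℝ) - 1))} := by
    apply Set.Finite.bddAbove
    refine ((Finset.Icc 2 k).finite_toSet.image (fun ℓ : ℕ =>
      ((alphaR S ℓ : ℝ) / (alphaR S 1 : ℝ) * (1/(k:ℝ)) *
                  (Nat.choose k ℓ : ℝ)) ^ (1 / ((ℓ:ℝ) - 1)))).subset ?_
    rintro x ⟨ℓ, h1, h2, rfl⟩
    exact ⟨ℓ, by simp [h1, h2], rfl⟩
  have h1 := le_csSup hbdd ⟨l, hl, hlk, rfl⟩
  set y : ℝ := (alphaR S l : ℝ) / (alphaR S 1 : ℝ) * (1/(k:ℝ)) * (Nat.choose k l : ℝ) with hy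
  have hy0 : 0 ≤ y := by positivity
  have h2 : y ^ (1 / ((l:ℝ) - 1)) ≤ q := by
    have h3 : C * (n / δ) * y ^ (1 / ((l:ℝ) - 1)) ≤ t :=
      le_trans (mul_le_mul_of_nonneg_left h1 (by positivity)) h
    rw [hq, le_div_iff₀ (by positivity)]
    have h4 := mul_le_mul_of_nonneg_left h3 hδ.le
    refine le_trans (le_of_eq ?_) h4
    field_simp
  have h5 : y ≤ q ^ (l - 1) := by
    have h6 := pow_le_pow_left₀ (Real.rpow_nonneg hy0 _) h2 (l - 1)
    rw [← Real.rpow_natCast, ← Real.rpow_mul hy0, Nat.cast_sub (by omega)] at h6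
    have : (l : ℝ) - 1 ≠ 0 := by
      have : (2:ℝ) ≤ l := by exact_mod_cast hl
      linarith
    rw [Nat.cast_one, one_div_mul_cancel this, Real.rpow_one] at h6
    exact h6
  have ha' : (0:ℝ) < alphaR S 1 := by exact_mod_cast ha
  have hk' : (0:ℝ) < k := by exact_mod_cast (by omega : 0 < k)
  have hk1 : (1:ℝ) ≤ k := by exact_mod_cast (by omega : 1 ≤ k)
  have hch : (1:ℝ) ≤ Nat.choose k l := by exact_mod_cast Nat.choose_pos hlk
  have h7 : (alphaR S l : ℝ) / (alphaR S 1 : ℝ) * (1/(k:ℝ)) ≤ y := by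
    rw [hy]
    exact le_mul_of_one_le_right (by positivity) hch
  have h8 : (alphaR S l : ℝ) / (alphaR S 1 : ℝ) * (1/(k:ℝ)) ≤ q ^ (l - 1) := h7.trans h5
  rw [mul_one_div, div_div, div_le_iff₀ (by positivity)] at h8
  refine h8.trans ?_
  rw [mul_pow]
  have h9 : (k:ℝ) ≤ k ^ (l - 1) := le_self_pow₀ hk1 (by omega)
  have : q ^ (l-1) * (alphaR S 1 * k) = k * (q ^ (l-1) * alphaR S 1) := by ring
  rw [this, mul_assoc]
  exact mul_le_mul_of_nonneg_right h9 (by positivity)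

set_option maxHeartbeats 400000 in
lemma core_lemma (k : ℕ) (hk : 2 ≤ k) (δ : ℝ) (hδ0 : 0 < δ) (hδ1 : δ < 1) (c : ℝ) (hc : 0 < c) :
    ∃ C : ℝ, 0 < C ∧ ∀ (G : Type) [Fintype G] [AddCommGroup G] (S : Finset (Fin k → G))
    (M : (Fin k → G) →+ (Fin k → G)) (_ : ∀ x : G, M (fun _ => x) = 0)
    (_ : ∀ x, x ∈ S ↔ M x = 0) (_ : (distinctPart S).Nonempty)
    (_ : ∀ X : Finset G, δ * (Fintype.card G : ℝ) ≤ (X.card : ℝ) →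
      c * ((distinctPart S).card : ℝ) ≤ (((distinctPart S).filter (fun x => ∀ j, x j ∈ X)).card : ℝ))
    (t : ℕ) (_ : C * ((Fintype.card G : ℝ) / δ) *
          sSup {x : ℝ | ∃ ℓ : ℕ, 2 ≤ ℓ ∧ ℓ ≤ k ∧
            x = ((alphaR S ℓ : ℝ) / (alphaR S 1 : ℝ) * (1/(k:ℝ)) *
                  (Nat.choose k ℓ : ℝ)) ^ (1 / ((ℓ:ℝ) - 1))} ≤ (t : ℝ))
    (_ : (t : ℝ) ≤ δ * (Fintype.card G : ℝ) / 2),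
        ((Finset.univ.filter (fun X : Finset G =>
            X.card = t ∧ ∀ x ∈ distinctPart S, ¬ (∀ j, x j ∈ X))).card : ℝ)
          ≤ (t : ℝ) * (2 * Real.exp 1 / δ^2) ^ (δ * (t:ℝ)) *
              (Nat.choose ⌊δ * (Fintype.card G : ℝ)⌋₊ t : ℝ) := by
  obtain ⟨η, hη, hlev⟩ := level_lemma k c 1 hc one_pos
  obtain ⟨m, hm⟩ := exists_nat_gt (1 / η)
  rw [div_lt_iff₀ hη] at hm
  obtain ⟨C, hC⟩ : ∃ C : ℝ, C = 2 * m * k ^ 2 + 1 := ⟨_, rfl⟩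
  have hC0 : 0 < C := by rw [hC]; positivity
  refine ⟨C, hC0, ?_⟩
  intro G _ _ S M hinv hker hne hsat t hlow hup
  obtain ⟨n, hn⟩ : ∃ n : ℝ, n = (Fintype.card G : ℝ) := ⟨_, rfl⟩
  rw [← hn] at hlow hup hsat
  rw [← hn]
  have hn0 : 0 < n := by rw [hn]; exact_mod_cast Fintype.card_pos
  have ha1 := alphaR_one S M hinv hker
  obtain ⟨x0, hx0⟩ := hne
  have hak : 1 ≤ alphaR S k := by
    have h1 := alphaR_ge S Finset.univ x0
    rw [Finset.card_univ, Fintype.card_fin] at h1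
    refine le_trans (Finset.card_pos.2 ⟨x0, ?_⟩) h1
    simp [hx0]
  have hapos : 0 < alphaR S 1 := by
    have h1 := alphaR_ge S {⟨0, by omega⟩} x0
    rw [Finset.card_singleton] at h1
    refine lt_of_lt_of_le (Finset.card_pos.2 ⟨x0, ?_⟩) h1
    simp [hx0]
  have ha1' : (alphaR S 1 : ℝ) * n ≤ ((distinctPart S).card : ℝ) := by rw [hn]; exact_mod_cast ha1
  have hapos' : (0:ℝ) < alphaR S 1 := by exact_mod_cast hapos
  obtain ⟨q, hq⟩ : ∃ q : ℝ, q = δ * t / (C * n) := ⟨_, rfl⟩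
  have hab := alpha_bound hk S n q C δ t hC0 hδ0 hn0 hq hapos hlow
  obtain ⟨p, hp⟩ : ∃ p : ℝ, p = k * q := ⟨_, rfl⟩
  rw [← hp] at hab
  have hp00 : 0 ≤ p := by rw [hp, hq]; positivity
  have hpn : 1 ≤ p * n := by
    have h1 := hab k hk le_rfl
    have h2 : (alphaR S 1 : ℝ) ≤ n ^ (k - 1) := by
      have h3 : ((distinctPart S).card : ℝ) ≤ n ^ k := by
        have := Finset.card_le_univ (distinctPart S)
        rw [Fintype.card_fun, Fintype.card_fin] at this
        rw [hn]; exact_mod_cast this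
      have h4 : n ^ k = n ^ (k - 1) * n := by rw [← pow_succ]; congr 1; omega
      rw [h4] at h3
      exact le_of_mul_le_mul_right (ha1'.trans h3) hn0
    have h5 : (1:ℝ) ≤ (p * n) ^ (k - 1) := by
      have : (1:ℝ) ≤ alphaR S k := by exact_mod_cast hak
      rw [mul_pow]
      exact this.trans (h1.trans (mul_le_mul_of_nonneg_left h2 (by positivity)))
    by_contra hlt
    have := pow_lt_one₀ (by positivity) (not_le.1 hlt) (by omega : k - 1 ≠ 0)
    linarith
  have hp0 : 0 < p := by
    by_contra h
    nlinarith
  have ht : 1 ≤ t := by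
    by_contra h
    have : t = 0 := by omega
    simp [hp, hq, this] at hp0
  obtain ⟨b, hb⟩ : ∃ b : ℕ, b = ⌈p * n⌉₊ := ⟨_, rfl⟩
  have hb1 : p * n ≤ b := by rw [hb]; exact Nat.le_ceil _
  have hb2 : (b : ℝ) ≤ 2 * (p * n) := by
    have := Nat.ceil_lt_add_one (by positivity : 0 ≤ p * n)
    rw [← hb] at this
    linarith
  have hstep : ∀ X : Finset G, δ * n ≤ (X.card : ℝ) →
      ContP (fun I : Finset G => ∀ x ∈ distinctPart S, ¬ (∀ j, x j ∈ I)) (k * b)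
        (fun C => η * n ≤ ((X \ C).card : ℝ)) := by
    intro X hX
    let A : (Fin k → G) → ℝ := fun x => if x ∈ distinctPart S ∧ ∀ j, x j ∈ X then 1 else 0
    have hgood : GoodW k c 1 (alphaR S 1 : ℝ) p X A := by
      refine ⟨?_, ?_, ?_, ?_⟩
      · intro x; simp only [A]; split_ifs <;> simp
      · have h1 : ∑ x, A x = (((distinctPart S).filter (fun x => ∀ j, x j ∈ X)).card : ℝ) := by
          simp only [A]
          rw [Finset.sum_boole]
          congr 2
          ext x; simp
        rw [h1, ← hn]
        refine le_trans ?_ (hsat X hX)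
        rw [mul_assoc]
        exact mul_le_mul_of_nonneg_left ha1' hc.le
      · intro U hU g
        have h1 : dgr A U g ≤ (alphaR S U.card : ℝ) := by
          refine le_trans ?_ (Nat.cast_le.2 (alphaR_ge S U g))
          have : (((distinctPart S).filter fun x => ∀ j ∈ U, x j = g j).card : ℝ)
              = ∑ x, if (x ∈ distinctPart S ∧ ∀ j ∈ U, x j = g j) then (1:ℝ) else 0 := by
            rw [Finset.sum_boole]
            congr 2
            ext x; simp
          rw [this]
          unfold dgr
          refine Finset.sum_le_sum fun x _ => ?_
          simp only [A]
          split_ifs <;> first | simp | tauto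
        refine h1.trans ?_
        rw [one_mul]
        have hU1 := hU.card_pos
        by_cases h2 : U.card = 1
        · rw [h2]; simp
        · refine hab U.card (by omega) ?_
          simpa using Finset.card_le_univ U
      · intro x hx
        by_contra hcon
        apply hx
        simp only [A]
        rw [if_neg]
        exact fun h => hcon h.2
    obtain ⟨T, C', h⟩ := hlev G Fintype.card_pos (alphaR S 1) p hapos' hp0 b
      (by rw [← hn]; exact hb1) (by rw [← hn]; exact hb2) X A hgood
    rw [← hn] at h
    refine ⟨T, C', fun I hI => h I ?_⟩
    intro x hx
    simp only [A]
    rw [if_neg]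
    exact fun h => hI x h.1 hx
  have hiter := iterate_lemma _ (k * b) (η * n) (δ * n) hstep m Finset.univ (by
    rw [Finset.card_univ, ← hn]
    have : 0 < δ * n := by positivity
    nlinarith)
  have hfin : ContP (fun I : Finset G => ∀ x ∈ distinctPart S, ¬ (∀ j, x j ∈ I)) (m * (k * b))
      (fun C => (C.card : ℝ) < δ * n) := by
    obtain ⟨T, C', h⟩ := hiter
    exact ⟨T, C', fun I hI => h I ⟨hI, Finset.subset_univ _⟩⟩
  rw [hn] at hup hfin ⊢
  have hbd : ((m * (k * b) : ℕ) : ℝ) ≤ δ * t := ?_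
  · have hcount := count_lemma _ t δ hδ0 hδ1 ht hup _ hbd hfin
    refine le_trans (le_of_eq ?_) hcount
    congr 2
    ext X
    simp only [Finset.mem_filter]
  push_cast
  have h1 : (m:ℝ) * (k * b) ≤ m * (k * (2 * (p * n))) := by gcongr
  refine h1.trans ?_
  have h2 : m * (k * (2 * (p * n))) = (2 * m * k ^ 2) * (δ * t) / C := by
    rw [hp, hq]
    field_simp
  rw [h2, div_le_iff₀ hC0, mul_comm]
  have : 0 ≤ δ * (t:ℝ) := by positivity
  exact mul_le_mul_of_nonneg_left (by rw [hC]; linarith) this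

/-- counting solution-free sets for normal sequences arising from invariant
homomorphisms of finite abelian groups. -/
theorem stmt5 (k : ℕ) (hk : 2 ≤ k) (δ : ℝ) (hδ0 : 0 < δ) (hδ1 : δ < 1)
    (G : ℕ → Type) [∀ i, Fintype (G i)] [∀ i, AddCommGroup (G i)]
    (S : ∀ i, Finset (Fin k → G i))
    (M : ∀ i, (Fin k → G i) →+ (Fin k → G i))
    (hinv : ∀ i (x : G i), M i (fun _ => x) = 0)
    (hker : ∀ i (x : Fin k → G i), x ∈ S i ↔ M i x = 0)
    (γ : ℝ → ℝ) (hnormal : NormalSeq k G S γ) :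
    ∃ (n₀ : ℕ) (C : ℝ), 0 < C ∧
      ∀ i, n₀ < Fintype.card (G i) → ∀ t : ℕ,
        C * ((Fintype.card (G i) : ℝ) / δ) *
          sSup {x : ℝ | ∃ ℓ : ℕ, 2 ≤ ℓ ∧ ℓ ≤ k ∧
            x = ((alphaR (S i) ℓ : ℝ) / (alphaR (S i) 1 : ℝ) * (1/(k:ℝ)) *
                  (Nat.choose k ℓ : ℝ)) ^ (1 / ((ℓ:ℝ) - 1))} ≤ (t : ℝ) →
        (t : ℝ) ≤ δ * (Fintype.card (G i) : ℝ) / 2 →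
        ((Finset.univ.filter (fun X : Finset (G i) =>
            X.card = t ∧ ∀ x ∈ distinctPart (S i), ¬ (∀ j, x j ∈ X))).card : ℝ)
          ≤ (t : ℝ) * (2 * Real.exp 1 / δ^2) ^ (δ * (t:ℝ)) *
              (Nat.choose ⌊δ * (Fintype.card (G i) : ℝ)⌋₊ t : ℝ) := by
  obtain ⟨h1, h2, h3, h4, h5, h6⟩ := hnormal
  obtain ⟨hγ0, hγ1⟩ := h5 δ hδ0 hδ1
  obtain ⟨C, hC, hcore⟩ := core_lemma k hk δ hδ0 hδ1 (γ δ / 2) (by positivity)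
  have hev := h4.eventually (lt_mem_nhds (by linarith : 1 - γ δ / 2 < 1))
  obtain ⟨N, hN⟩ := Filter.eventually_atTop.1 hev
  refine ⟨(Finset.range N).sup fun i => Fintype.card (G i), C, hC, ?_⟩
  intro i hi t hlow hup
  have hiN : N ≤ i := by
    by_contra h
    have := Finset.le_sup (f := fun i => Fintype.card (G i)) (Finset.mem_range.2 (not_le.1 h))
    omega
  have hr := hN i hiN
  have hS0 : (0:ℝ) < (S i).card := by
    have : 0 < (S i).card := Finset.card_pos.2 ⟨0, (hker i 0).2 (map_zero _)⟩
    exact_mod_cast this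
  rw [lt_div_iff₀ hS0] at hr
  have hsubS : distinctPart (S i) ⊆ S i := Finset.filter_subset _ _
  refine hcore (G i) (S i) (M i) (hinv i) (hker i) ?_ ?_ t hlow hup
  · rw [← Finset.card_pos]
    have : (0:ℝ) < (distinctPart (S i)).card := lt_trans (mul_pos (by linarith) hS0) hr
    exact_mod_cast this
  · intro X hX
    have h7 := h6 δ hδ0 hδ1 i X hX
    have h8 : (((S i).filter (fun x => ∀ j, x j ∈ X)).card : ℝ) ≤
        ((distinctPart (S i)).filter (fun x => ∀ j, x j ∈ X)).card
          + ((S i \ distinctPart (S i)).card : ℝ) := by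
      have : (S i).filter (fun x => ∀ j, x j ∈ X) ⊆
          (distinctPart (S i)).filter (fun x => ∀ j, x j ∈ X) ∪ (S i \ distinctPart (S i)) := by
        intro x hx
        simp only [Finset.mem_filter, Finset.mem_union, Finset.mem_sdiff] at hx ⊢
        tauto
      exact_mod_cast (Finset.card_le_card this).trans (Finset.card_union_le _ _)
    have h9 : ((S i \ distinctPart (S i)).card : ℝ) + (distinctPart (S i)).card = (S i).card := by
      exact_mod_cast Finset.card_sdiff_add_card_eq_card hsubS
    have h10 : ((distinctPart (S i)).card : ℝ) ≤ (S i).card := by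
      exact_mod_cast Finset.card_le_card hsubS
    nlinarith
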